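/- arXiv:math/0403446 — 3 statements merged into one kernel-verified Lean document; each statement's English description precedes it below -/
import Mathlib

section
/- Let f be a continuous function on the unit circle such that for every polynomial P with f + P nonvanishing on the unit circle, the winding number of f + P around 0 is nonnegative. Then the contour integral of f over the unit circle is zero, i.e., ∫_{bΔ} f(z) dz = 0. -/
open Polynomial Metric
open scoped Classical

/-- `g` (restricted to the unit circle) has winding number `n` around `0`:
there is a continuous argument lift `α` along `θ ↦ g (exp (iθ))` whose total
increase over `[0, 2π]` is `2πn`. -/
def HasWindingNumber (g : ℂ → ℂ) (n : ℤ) : Prop :=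
  ∃ α : ℝ → ℝ, Continuous α ∧
    (∀ θ : ℝ, g (Complex.exp (θ * Complex.I)) =
      (‖g (Complex.exp (θ * Complex.I))‖ : ℂ) * Complex.exp (α θ * Complex.I)) ∧
    α (2 * Real.pi) - α 0 = n * (2 * Real.pi)

/-- `f` on the unit circle extends continuously to the closed unit disc,
holomorphically on the open unit disc. -/
def ExtendsHolo (f : ℂ → ℂ) : Prop :=
  ∃ F : ℂ → ℂ, ContinuousOn F (closedBall 0 1) ∧
    DifferentiableOn ℂ F (ball 0 1) ∧ ∀ z ∈ sphere (0:ℂ) 1, F z = f z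

/-- Multiplicity of a zero of a (holomorphic) function: least `n` with
nonvanishing `n`-th derivative. -/
noncomputable def holoOrder (f : ℂ → ℂ) (z : ℂ) : ℕ :=
  sInf {n | iteratedDeriv n f z ≠ 0}

/-- The real part of a trigonometric polynomial is a constant plus the real part of a polynomial
vanishing at the origin. -/
theorem exists_polynomial_re_of_mem_span_fourier (g : C(AddCircle (2 * Real.pi), ℂ))
    (hg : g ∈ Submodule.span ℂ (Set.range (@fourier (2 * Real.pi)))) (a : ℂ) :
    ∃ (k : ℝ) (P : Polynomial ℂ), ∀ θ : ℝ,
      (a * g (θ : AddCircle (2 * Real.pi))).re =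
        k + (Complex.exp (θ * Complex.I) * P.eval (Complex.exp (θ * Complex.I))).re := by
  induction hg using Submodule.span_induction generalizing a with
  | mem g hg =>
    obtain ⟨n, rfl⟩ := hg
    have key : ∀ θ : ℝ, (fourier n (θ : AddCircle (2 * Real.pi)) : ℂ) =
        Complex.exp (n * (θ * Complex.I)) := by
      intro θ
      rw [fourier_coe_apply]
      congr 1
      have : (Real.pi : ℂ) ≠ 0 := by exact_mod_cast Real.pi_ne_zero
      push_cast
      field_simp
    rcases lt_trichotomy n 0 with hn | rfl | hn
    · obtain ⟨m, rfl⟩ : ∃ m : ℕ, n = -(m + 1 : ℤ) := ⟨(-n - 1).toNat, by omega⟩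
      refine ⟨0, C (starRingEnd ℂ a) * X ^ m, fun θ => ?_⟩
      rw [key, ← Complex.conj_re]
      simp only [eval_mul, eval_C, eval_pow, eval_X, zero_add, map_mul, ← Complex.exp_conj,
        Complex.conj_I, Complex.conj_ofReal, map_intCast]
      congr 1
      rw [mul_left_comm (Complex.exp _), ← pow_succ', ← Complex.exp_nat_mul]
      congr 2
      push_cast
      ring
    · refine ⟨a.re, 0, fun θ => ?_⟩
      rw [key]
      simp
    · obtain ⟨m, rfl⟩ : ∃ m : ℕ, n = (m + 1 : ℤ) := ⟨(n - 1).toNat, by omega⟩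
      refine ⟨0, C a * X ^ m, fun θ => ?_⟩
      rw [key]
      simp only [eval_mul, eval_C, eval_pow, eval_X, zero_add]
      congr 1
      rw [mul_left_comm (Complex.exp _), ← pow_succ', ← Complex.exp_nat_mul]
      push_cast
      rfl
  | zero => exact ⟨0, 0, by simp⟩
  | add g₁ g₂ _ _ h₁ h₂ =>
    obtain ⟨k₁, P₁, h₁⟩ := h₁ a
    obtain ⟨k₂, P₂, h₂⟩ := h₂ a
    refine ⟨k₁ + k₂, P₁ + P₂, fun θ => ?_⟩
    rw [ContinuousMap.add_apply, mul_add, Complex.add_re, h₁, h₂, eval_add, mul_add,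
      Complex.add_re]
    ring
  | smul b g _ h =>
    obtain ⟨k, P, h⟩ := h (a * b)
    refine ⟨k, P, fun θ => ?_⟩
    rw [← h, ContinuousMap.smul_apply, smul_eq_mul, mul_assoc]

/-- The real part of a continuous function on the unit circle is uniformly approximated by
a constant plus the real part of a polynomial vanishing at the origin. -/
theorem exists_polynomial_re_approx {u : ℂ → ℂ} (hu : ContinuousOn u (sphere (0 : ℂ) 1))
    {ε : ℝ} (hε : 0 < ε) :
    ∃ (k : ℝ) (P : Polynomial ℂ), ∀ θ : ℝ,
      |(u (Complex.exp (θ * Complex.I))).re - k -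
        (Complex.exp (θ * Complex.I) * P.eval (Complex.exp (θ * Complex.I))).re| < ε := by
  have : Fact (0 < 2 * Real.pi) := ⟨Real.two_pi_pos⟩
  let g : C(AddCircle (2 * Real.pi), ℂ) :=
    ⟨fun t => u (AddCircle.toCircle t), hu.comp_continuous
      (continuous_subtype_val.comp AddCircle.continuous_toCircle) fun t =>
        mem_sphere_zero_iff_norm.2 (Circle.norm_coe _)⟩
  have hg : g ∈ (Submodule.span ℂ (Set.range (@fourier (2 * Real.pi)))).topologicalClosure := by
    rw [span_fourier_closure_eq_top]
    trivial
  obtain ⟨p, hp, hgp⟩ := Metric.mem_closure_iff.1 hg ε hε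
  obtain ⟨k, P, hP⟩ := exists_polynomial_re_of_mem_span_fourier p hp 1
  refine ⟨k, P, fun θ => ?_⟩
  have hθ : g (θ : AddCircle (2 * Real.pi)) = u (Complex.exp (θ * Complex.I)) := by
    change u (AddCircle.toCircle (θ : AddCircle (2 * Real.pi))) = _
    rw [AddCircle.toCircle_apply_mk, div_self Real.two_pi_pos.ne', one_mul, Circle.coe_exp]
  rw [sub_sub, ← hP, one_mul, ← hθ, ← Complex.sub_re]
  exact (Complex.abs_re_le_norm _).trans_lt
    ((dist_eq_norm (g θ) (p θ) ▸ ContinuousMap.dist_apply_le_dist _).trans_lt hgp)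

/-- A function `g` on the unit circle for which `z * g z / c` has positive real part
has winding number `-1`. -/
theorem hasWindingNumber_neg_one {g : ℂ → ℂ} (hg : ContinuousOn g (sphere (0 : ℂ) 1)) {c : ℂ}
    (hc : c ≠ 0)
    (hpos : ∀ θ : ℝ,
      0 < (Complex.exp (θ * Complex.I) * g (Complex.exp (θ * Complex.I)) / c).re) :
    HasWindingNumber g (-1) := by
  let w : ℝ → ℂ := fun θ => Complex.exp (θ * Complex.I) * g (Complex.exp (θ * Complex.I)) / c
  have hcont : Continuous w := by
    have : Continuous fun θ : ℝ => g (Complex.exp (θ * Complex.I)) :=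
      hg.comp_continuous (by fun_prop) fun θ => by simp [Complex.norm_exp_ofReal_mul_I]
    exact (Continuous.mul (by fun_prop) this).div_const c
  refine ⟨fun θ => -θ + c.arg + (w θ).arg, ?_, fun θ => ?_, ?_⟩
  · refine (by fun_prop : Continuous fun θ : ℝ => -θ + c.arg).add ?_
    exact continuous_iff_continuousAt.2 fun θ =>
      ContinuousAt.comp (f := w) (Complex.continuousAt_arg (Or.inl (hpos θ))) hcont.continuousAt
  · have hgw : g (Complex.exp (θ * Complex.I)) = Complex.exp (-θ * Complex.I) * c * w θ := by
      simp only [w]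
      rw [neg_mul, Complex.exp_neg]
      field_simp [Complex.exp_ne_zero]
    have hnorm : ‖g (Complex.exp (θ * Complex.I))‖ = ‖c‖ * ‖w θ‖ := by
      rw [hgw, norm_mul, norm_mul, ← Complex.ofReal_neg, Complex.norm_exp_ofReal_mul_I, one_mul]
    rw [hnorm]
    push_cast
    rw [hgw, add_mul, add_mul, Complex.exp_add, Complex.exp_add]
    conv_lhs => rw [← Complex.norm_mul_exp_arg_mul_I c, ← Complex.norm_mul_exp_arg_mul_I (w θ)]
    ring
  · have hw : w (2 * Real.pi) = w 0 := by
      simp [w, Complex.exp_two_pi_mul_I]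
    simp only [hw]
    push_cast
    ring

theorem stmt0 (f : ℂ → ℂ) (hf : ContinuousOn f (sphere (0:ℂ) 1))
    (h : ∀ P : Polynomial ℂ, (∀ z ∈ sphere (0:ℂ) 1, f z + P.eval z ≠ 0) →
      ∀ n : ℤ, HasWindingNumber (fun z => f z + P.eval z) n → 0 ≤ n) :
    (∮ z in C(0, 1), f z) = 0 := by
  by_contra hne
  set c : ℂ := (∮ z in C(0, 1), f z) / (2 * Real.pi * Complex.I) with hc_def
  have hc : c ≠ 0 := div_ne_zero hne Complex.two_pi_I_ne_zero
  obtain ⟨k, P, hP⟩ := exists_polynomial_re_approx (u := fun z => z * f z / c) (by fun_prop)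
    (show (0 : ℝ) < 1 / 4 by norm_num)
  let g : ℂ → ℂ := fun z => f z + (C (-c) * P).eval z
  have hgc : ContinuousOn g (sphere (0 : ℂ) 1) := hf.add (Polynomial.continuous _).continuousOn
  let v : ℝ → ℂ := fun θ => Complex.exp (θ * Complex.I) * g (Complex.exp (θ * Complex.I)) / c
  have hv : Continuous v := by
    have : Continuous fun θ : ℝ => g (Complex.exp (θ * Complex.I)) :=
      hgc.comp_continuous (by fun_prop) fun θ => by simp [Complex.norm_exp_ofReal_mul_I]
    exact (Continuous.mul (by fun_prop) this).div_const c
  have hvk : ∀ θ, |(v θ).re - k| < 1 / 4 := by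
    intro θ
    convert hP θ using 2
    have : v θ = Complex.exp (θ * Complex.I) * f (Complex.exp (θ * Complex.I)) / c -
        Complex.exp (θ * Complex.I) * P.eval (Complex.exp (θ * Complex.I)) := by
      simp only [v, g, eval_mul, eval_C]
      field_simp
      ring
    rw [this, Complex.sub_re]
    ring
  have hint : ∫ θ in (0 : ℝ)..2 * Real.pi, v θ = 2 * Real.pi := by
    have hg : (∮ z in C(0, 1), g z) = ∮ z in C(0, 1), f z := by
      have hPz : (∮ z in C(0, 1), (C (-c) * P).eval z) = 0 :=
        (Polynomial.differentiable _).diffContOnCl.circleIntegral_eq_zero zero_le_one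
      rw [circleIntegral.integral_add (hf.circleIntegrable zero_le_one)
        ((Polynomial.continuous _).continuousOn.circleIntegrable zero_le_one), hPz, add_zero]
    have hvg : (∮ z in C(0, 1), g z) = (Complex.I * c) * ∫ θ in (0 : ℝ)..2 * Real.pi, v θ := by
      rw [← intervalIntegral.integral_const_mul, circleIntegral]
      refine intervalIntegral.integral_congr fun θ _ => ?_
      simp only [deriv_circleMap, circleMap, v, smul_eq_mul, Complex.ofReal_one, one_mul, zero_add]
      field_simp
    have hfc : (∮ z in C(0, 1), f z) = c * (2 * Real.pi * Complex.I) :=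
      (div_mul_cancel₀ _ Complex.two_pi_I_ne_zero).symm
    apply mul_left_cancel₀ (mul_ne_zero Complex.I_ne_zero hc)
    rw [← hvg, hg, hfc]
    ring
  have hre : ∫ θ in (0 : ℝ)..2 * Real.pi, (v θ).re = 2 * Real.pi := by
    have := Complex.reCLM.intervalIntegral_comp_comm
      (hv.intervalIntegrable (μ := MeasureTheory.volume) 0 (2 * Real.pi))
    simp only [Complex.reCLM_apply] at this
    rw [this, hint]
    simp
  have hk : 3 / 4 ≤ k := by
    have hle : ∫ θ in (0 : ℝ)..2 * Real.pi, (v θ).re ≤ ∫ _ in (0 : ℝ)..2 * Real.pi, (k + 1 / 4) :=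
      intervalIntegral.integral_mono_on Real.two_pi_pos.le
        ((Complex.continuous_re.comp hv).intervalIntegrable _ _) (by simp)
        fun θ _ => by linarith [(abs_lt.1 (hvk θ)).2]
    rw [hre, intervalIntegral.integral_const, smul_eq_mul, sub_zero] at hle
    have := le_of_mul_le_mul_left ((mul_one _).trans_le hle) Real.two_pi_pos
    linarith
  have hpos : ∀ θ, 0 < (v θ).re := fun θ => by linarith [(abs_lt.1 (hvk θ)).1]
  have hg0 : ∀ z ∈ sphere (0 : ℂ) 1, g z ≠ 0 := by
    intro z hz hgz
    have hzarg : Complex.exp (z.arg * Complex.I) = z := by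
      have := Complex.norm_mul_exp_arg_mul_I z
      rwa [mem_sphere_zero_iff_norm.1 hz, Complex.ofReal_one, one_mul] at this
    have := hpos z.arg
    simp [v, hzarg, hgz] at this
  exact absurd (h (C (-c) * P) hg0 (-1) (hasWindingNumber_neg_one hgc hc hpos)) (by norm_num)
end

section
/- A continuous function f on the unit circle bΔ extends continuously to the closed unit disc so as to be holomorphic on the open disc if and only if: for every polynomial P such that f + P is nonvanishing on bΔ, the winding number of f + P around 0 is nonnegative. -/
open Polynomial Metric
open scoped Classical

namespace HasWindingNumber

theorem exp_mem_sphere (θ : ℝ) : Complex.exp (θ * Complex.I) ∈ sphere (0 : ℂ) 1 := by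
  simp [Complex.norm_exp_ofReal_mul_I]

theorem continuous_comp_exp {g : ℂ → ℂ} (hg : ContinuousOn g (sphere (0 : ℂ) 1)) :
    Continuous fun θ : ℝ => g (Complex.exp (θ * Complex.I)) :=
  hg.comp_continuous (by fun_prop) exp_mem_sphere

theorem congr {g h : ℂ → ℂ} {n : ℤ} (hg : HasWindingNumber g n)
    (H : ∀ z ∈ sphere (0 : ℂ) 1, g z = h z) : HasWindingNumber h n := by
  obtain ⟨α, hα, hp, hn⟩ := hg
  refine ⟨α, hα, fun θ => ?_, hn⟩
  rw [← H _ (exp_mem_sphere θ)]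
  exact hp θ

theorem mul {g h : ℂ → ℂ} {m n : ℤ} (hg : HasWindingNumber g m) (hh : HasWindingNumber h n) :
    HasWindingNumber (fun z => g z * h z) (m + n) := by
  obtain ⟨α, hα, hp, hm⟩ := hg
  obtain ⟨β, hβ, hq, hn⟩ := hh
  refine ⟨fun θ => α θ + β θ, hα.add hβ, fun θ => ?_, ?_⟩
  · have : (((α θ + β θ : ℝ) : ℂ)) * Complex.I = α θ * Complex.I + β θ * Complex.I := by
      push_cast; ring
    rw [this, Complex.exp_add, norm_mul]
    beta_reduce
    conv_lhs => rw [hp θ, hq θ]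
    push_cast
    ring
  · push_cast
    linear_combination hm + hn

theorem inv {g : ℂ → ℂ} {m : ℤ} (hg : HasWindingNumber g m) :
    HasWindingNumber (fun z => (g z)⁻¹) (-m) := by
  obtain ⟨α, hα, hp, hm⟩ := hg
  refine ⟨fun θ => -α θ, hα.neg, fun θ => ?_, ?_⟩
  · have : (((-α θ : ℝ) : ℂ)) * Complex.I = -(α θ * Complex.I) := by
      push_cast; ring
    rw [this, Complex.exp_neg, norm_inv]
    beta_reduce
    conv_lhs => rw [hp θ]
    push_cast
    rw [mul_inv]
  · push_cast
    linear_combination -hm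

theorem unique {g : ℂ → ℂ} {m n : ℤ} (hg : HasWindingNumber g m) (hh : HasWindingNumber g n)
    (h0 : ∀ z ∈ sphere (0 : ℂ) 1, g z ≠ 0) : m = n := by
  obtain ⟨α, hα, hp, hm⟩ := hg
  obtain ⟨β, hβ, hq, hn⟩ := hh
  have key : ∀ θ, ∃ k : ℤ, α θ - β θ = k * (2 * Real.pi) := by
    intro θ
    have h1 := (hp θ).symm.trans (hq θ)
    have h2 : (‖g (Complex.exp (θ * Complex.I))‖ : ℂ) ≠ 0 := by
      simpa using h0 _ (exp_mem_sphere θ)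
    obtain ⟨k, hk⟩ := Complex.exp_eq_exp_iff_exists_int.1 (mul_left_cancel₀ h2 h1)
    refine ⟨k, ?_⟩
    have h3 : (α θ : ℂ) = β θ + k * (2 * Real.pi) :=
      mul_right_cancel₀ Complex.I_ne_zero (by linear_combination hk)
    have h4 : α θ = β θ + k * (2 * Real.pi) := by exact_mod_cast h3
    linarith
  choose k hk using key
  have hpi := Real.pi_pos
  have hkc : Continuous k := by
    rw [Int.isClosedEmbedding_coe_real.isEmbedding.continuous_iff]
    have : ((fun n : ℤ => (n : ℝ)) ∘ k) = fun θ => (α θ - β θ) / (2 * Real.pi) := by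
      funext θ
      rw [Function.comp, hk θ]
      field_simp
    rw [this]
    fun_prop
  have h5 : k (2 * Real.pi) = k 0 := PreconnectedSpace.constant inferInstance hkc
  have h6 := hk (2 * Real.pi)
  have h7 := hk 0
  rw [h5] at h6
  have h8 : (m : ℝ) * (2 * Real.pi) = n * (2 * Real.pi) := by linarith
  exact_mod_cast mul_right_cancel₀ (by positivity) h8

theorem const {c : ℂ} : HasWindingNumber (fun _ => c) 0 :=
  ⟨fun _ => c.arg, continuous_const, fun _ => (Complex.norm_mul_exp_arg_mul_I c).symm, by simp⟩

theorem id : HasWindingNumber (fun z => z) 1 :=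
  ⟨fun θ => θ, continuous_id, fun θ => by simp [Complex.norm_exp_ofReal_mul_I], by simp⟩

theorem pow {g : ℂ → ℂ} {n : ℤ} (hg : HasWindingNumber g n) (k : ℕ) :
    HasWindingNumber (fun z => g z ^ k) (k * n) := by
  induction k with
  | zero => simpa using const (c := 1)
  | succ k ih =>
    simp only [pow_succ]
    convert ih.mul hg using 1
    push_cast
    ring

theorem of_norm_sub_one_lt {g : ℂ → ℂ} (hg : ContinuousOn g (sphere (0 : ℂ) 1))
    (h : ∀ z ∈ sphere (0 : ℂ) 1, ‖g z - 1‖ < 1) : HasWindingNumber g 0 := by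
  have hc := continuous_comp_exp hg
  refine ⟨fun θ => (g (Complex.exp (θ * Complex.I))).arg, ?_,
    fun θ => (Complex.norm_mul_exp_arg_mul_I _).symm, ?_⟩
  · rw [continuous_iff_continuousAt]
    intro θ
    refine (Complex.continuousAt_arg (Or.inl ?_)).comp' hc.continuousAt
    have h1 := (Complex.abs_re_le_norm _).trans_lt (h _ (exp_mem_sphere θ))
    rw [Complex.sub_re, Complex.one_re, abs_lt] at h1
    linarith
  · simp

theorem of_norm_sub_lt {g h : ℂ → ℂ} {n : ℤ} (hn : HasWindingNumber g n)
    (hg : ContinuousOn g (sphere (0 : ℂ) 1)) (hh : ContinuousOn h (sphere (0 : ℂ) 1))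
    (H : ∀ z ∈ sphere (0 : ℂ) 1, ‖h z - g z‖ < ‖g z‖) : HasWindingNumber h n := by
  have h0 : ∀ z ∈ sphere (0 : ℂ) 1, g z ≠ 0 := fun z hz hgz => by
    have := H z hz
    rw [hgz, norm_zero] at this
    exact absurd this (norm_nonneg _).not_gt
  have h1 : HasWindingNumber (fun z => h z / g z) 0 := by
    refine of_norm_sub_one_lt (hh.div hg h0) fun z hz => ?_
    have := h0 z hz
    rw [div_sub_one this, norm_div, div_lt_one (norm_pos_iff.2 this)]
    exact H z hz
  have h2 := hn.mul h1
  rw [add_zero] at h2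
  exact h2.congr fun z hz => mul_div_cancel₀ _ (h0 z hz)

theorem X_sub_C {a : ℂ} (ha : ‖a‖ ≠ 1) :
    HasWindingNumber (fun z => z - a) (if ‖a‖ < 1 then 1 else 0) := by
  split_ifs with h
  · refine id.of_norm_sub_lt (by fun_prop) (by fun_prop) fun z hz => ?_
    rw [mem_sphere_zero_iff_norm] at hz
    simpa [hz] using h
  · refine (const (c := -a)).of_norm_sub_lt (by fun_prop) (by fun_prop) fun z hz => ?_
    rw [mem_sphere_zero_iff_norm] at hz
    simpa [hz] using lt_of_le_of_ne (not_lt.1 h) ha.symm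

theorem multiset_prod (s : Multiset ℂ) (hs : ∀ a ∈ s, ‖a‖ ≠ 1) :
    HasWindingNumber (fun z => (s.map fun a => z - a).prod)
      (Multiset.card (s.filter fun a => ‖a‖ < 1)) := by
  induction s using Multiset.induction_on with
  | empty => simpa using const (c := 1)
  | cons a s ih =>
    have h1 := (X_sub_C (hs a (Multiset.mem_cons_self a s))).mul
      (ih fun b hb => hs b (Multiset.mem_cons_of_mem hb))
    simp only [Multiset.map_cons, Multiset.prod_cons]
    convert h1 using 1
    rw [Multiset.filter_cons]
    split_ifs <;> simp [add_comm]

/-- The argument principle for polynomials. -/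
theorem polynomial (Q : ℂ[X]) (hQ : ∀ z ∈ sphere (0 : ℂ) 1, Q.eval z ≠ 0) :
    HasWindingNumber (fun z => Q.eval z)
      (Multiset.card (Q.roots.filter fun a => ‖a‖ < 1)) := by
  have h1 := (const (c := Q.leadingCoeff)).mul (multiset_prod Q.roots fun a ha h =>
    hQ a (mem_sphere_zero_iff_norm.2 h) (isRoot_of_mem_roots ha))
  rw [zero_add] at h1
  refine h1.congr fun z _ => ?_
  conv_rhs => rw [(IsAlgClosed.splits Q).eq_prod_roots]
  simp [eval_multiset_prod, Multiset.map_map]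

end HasWindingNumber

/-- The `ℓ²` inner product of the first `N` coefficients of two polynomials. -/
noncomputable def truncInner (N : ℕ) (x y : ℂ[X]) : ℂ :=
  ∑ i ∈ Finset.range N, starRingEnd ℂ (x.coeff i) * y.coeff i

/-- The squared `ℓ²` norm of the first `N` coefficients of a polynomial. -/
noncomputable def truncNormSq (N : ℕ) (x : ℂ[X]) : ℝ :=
  ∑ i ∈ Finset.range N, ‖x.coeff i‖ ^ 2

theorem truncNormSq_nonneg (N : ℕ) (x : ℂ[X]) : 0 ≤ truncNormSq N x :=
  Finset.sum_nonneg fun _ _ => sq_nonneg _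

theorem truncInner_conj (N : ℕ) (x y : ℂ[X]) :
    starRingEnd ℂ (truncInner N x y) = truncInner N y x := by
  simp [truncInner, mul_comm]

theorem truncNormSq_add_C_mul (N : ℕ) (x y : ℂ[X]) (t : ℂ) :
    truncNormSq N (x + C t * y) =
      truncNormSq N x + 2 * (t * truncInner N x y).re + ‖t‖ ^ 2 * truncNormSq N y := by
  simp only [truncNormSq, truncInner, Finset.mul_sum, Complex.re_sum, ← Finset.sum_add_distrib]
  refine Finset.sum_congr rfl fun i _ => ?_
  simp only [coeff_add, coeff_C_mul, Complex.sq_norm, Complex.normSq_apply, Complex.add_re,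
    Complex.add_im, Complex.mul_re, Complex.mul_im, Complex.conj_re, Complex.conj_im]
  ring

theorem truncNormSq_C_mul (N : ℕ) (y : ℂ[X]) (t : ℂ) :
    truncNormSq N (C t * y) = ‖t‖ ^ 2 * truncNormSq N y := by
  simp [truncNormSq, mul_pow, Finset.mul_sum]

theorem truncNormSq_X_mul (M : ℕ) (x : ℂ[X]) :
    truncNormSq (M + 1) (X * x) = truncNormSq (M + 1) x - ‖x.coeff M‖ ^ 2 := by
  rw [truncNormSq, Finset.sum_range_succ', truncNormSq, Finset.sum_range_succ]
  simp

theorem truncNormSq_X_sub_C_mul (M : ℕ) (x : ℂ[X]) (a : ℂ) :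
    truncNormSq (M + 1) ((X - C a) * x) =
      truncNormSq (M + 1) ((1 - C (starRingEnd ℂ a) * X) * x)
        - (1 - ‖a‖ ^ 2) * ‖x.coeff M‖ ^ 2 := by
  have h1 : (X - C a) * x = X * x + C (-a) * x := by simp; ring
  have h2 : (1 - C (starRingEnd ℂ a) * X) * x = x + C (-starRingEnd ℂ a) * (X * x) := by
    simp; ring
  have h3 : (-starRingEnd ℂ a * truncInner (M + 1) x (X * x)).re =
      (-a * truncInner (M + 1) (X * x) x).re := by
    rw [← truncInner_conj, ← Complex.conj_re]
    simp
  rw [h1, h2, truncNormSq_add_C_mul, truncNormSq_add_C_mul, h3, truncNormSq_X_mul]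
  simp only [norm_neg, RCLike.norm_conj]
  ring

/-- At a maximizing vector, the quadratic form `σ‖·‖² - ‖p ·‖²` is stationary. -/
theorem truncInner_mul_mul_of_max {N : ℕ} {p x : ℂ[X]} {σ : ℝ}
    (hmax : ∀ y, truncNormSq N (p * y) ≤ σ * truncNormSq N y)
    (hx : truncNormSq N (p * x) = σ * truncNormSq N x) (y : ℂ[X]) :
    truncInner N (p * x) (p * y) = σ * truncInner N x y := by
  set c : ℂ := σ * truncInner N x y - truncInner N (p * x) (p * y) with hc
  set q : ℝ := σ * truncNormSq N y - truncNormSq N (p * y) with hq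
  have hq0 : 0 ≤ q := sub_nonneg.2 (hmax y)
  suffices c = 0 by rw [hc, sub_eq_zero] at this; exact this.symm
  have key : ∀ t : ℂ, 0 ≤ 2 * (t * c).re + ‖t‖ ^ 2 * q := by
    intro t
    have h := hmax (x + C t * y)
    have h1 : p * (x + C t * y) = p * x + C t * (p * y) := by ring
    rw [h1, truncNormSq_add_C_mul, truncNormSq_add_C_mul, hx] at h
    have h2 : (t * c).re = σ * (t * truncInner N x y).re
        - (t * truncInner N (p * x) (p * y)).re := by
      rw [← Complex.re_ofReal_mul, ← Complex.sub_re, hc]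
      congr 1
      ring
    rw [h2, hq]
    linarith
  have h := key (-(1 / (q + 1) : ℝ) * starRingEnd ℂ c)
  have h1 : (-((1 / (q + 1) : ℝ) : ℂ) * starRingEnd ℂ c * c).re = -(1 / (q + 1)) * ‖c‖ ^ 2 := by
    rw [mul_assoc, Complex.conj_mul', ← Complex.ofReal_neg, Complex.re_ofReal_mul]
    norm_cast
  have h2 : ‖-((1 / (q + 1) : ℝ) : ℂ) * starRingEnd ℂ c‖ = 1 / (q + 1) * ‖c‖ := by
    rw [norm_mul, norm_neg, Complex.norm_real, RCLike.norm_conj, Real.norm_of_nonneg (by positivity)]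
  rw [h1, h2] at h
  have h3 : 0 < q + 1 := by linarith
  have h4 : 2 * (-(1 / (q + 1)) * ‖c‖ ^ 2) + (1 / (q + 1) * ‖c‖) ^ 2 * q =
      -((q + 2) / (q + 1) ^ 2) * ‖c‖ ^ 2 := by
    field_simp
    ring
  rw [h4] at h
  have h5 : 0 < (q + 2) / (q + 1) ^ 2 := by positivity
  have h6 : ‖c‖ ^ 2 ≤ 0 := by nlinarith
  simpa using le_antisymm h6 (sq_nonneg _)

/-- Division of a maximizing vector by a linear factor with root in the open disc gives a
maximizing vector. -/
theorem max_of_max_X_sub_C_mul {M : ℕ} {p k : ℂ[X]} {σ : ℝ} {a : ℂ}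
    (hmax : ∀ y, truncNormSq (M + 1) (p * y) ≤ σ * truncNormSq (M + 1) y)
    (hx : truncNormSq (M + 1) (p * ((X - C a) * k)) = σ * truncNormSq (M + 1) ((X - C a) * k))
    (hk : k.coeff M = 0) (ha : ‖a‖ < 1) :
    truncNormSq (M + 1) (p * k) = σ * truncNormSq (M + 1) k := by
  set x := (X - C a) * k with hxdef
  set y := (1 - C (starRingEnd ℂ a) * X) * k with hydef
  have ha2 : 0 < 1 - ‖a‖ ^ 2 := by nlinarith [norm_nonneg a]
  have h1 : truncNormSq (M + 1) x = truncNormSq (M + 1) y := by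
    rw [hxdef, truncNormSq_X_sub_C_mul, hk]
    simp [hydef]
  have h2 : truncNormSq (M + 1) (p * x) ≤ truncNormSq (M + 1) (p * y) := by
    rw [hxdef, hydef, mul_left_comm, truncNormSq_X_sub_C_mul, mul_left_comm p]
    nlinarith [mul_nonneg ha2.le (sq_nonneg ‖(p * k).coeff M‖)]
  have hy : truncNormSq (M + 1) (p * y) = σ * truncNormSq (M + 1) y :=
    le_antisymm (hmax y) (by rw [← h1, ← hx]; exact h2)
  have hyx := truncInner_mul_mul_of_max hmax hy x
  have h3 : C ((1 - ‖a‖ ^ 2 : ℝ) : ℂ) * k = y + C (starRingEnd ℂ a) * x := by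
    have : ((1 - ‖a‖ ^ 2 : ℝ) : ℂ) = 1 - starRingEnd ℂ a * a := by
      rw [Complex.conj_mul']; push_cast; ring
    rw [this, hxdef, hydef]
    simp only [C_sub, C_mul, C_1]
    ring
  have h4 : truncNormSq (M + 1) (p * (C ((1 - ‖a‖ ^ 2 : ℝ) : ℂ) * k)) =
      σ * truncNormSq (M + 1) (C ((1 - ‖a‖ ^ 2 : ℝ) : ℂ) * k) := by
    have h5 : p * (y + C (starRingEnd ℂ a) * x) = p * y + C (starRingEnd ℂ a) * (p * x) := by ring
    rw [h3, h5, truncNormSq_add_C_mul, truncNormSq_add_C_mul, hx, hy, hyx, mul_left_comm,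
      Complex.re_ofReal_mul]
    ring
  rw [mul_left_comm, truncNormSq_C_mul, truncNormSq_C_mul, mul_left_comm] at h4
  refine mul_left_cancel₀ ?_ h4
  rw [Complex.norm_real]
  exact pow_ne_zero 2 (norm_ne_zero_iff.2 ha2.ne')

theorem norm_sum_sq (b : ℕ → ℂ) (N : ℕ) :
    ‖∑ i ∈ Finset.range N, b i‖ ^ 2 =
      2 * (∑ m ∈ Finset.range N, starRingEnd ℂ (b m) * ∑ i ∈ Finset.range (m + 1), b i).re
        - ∑ i ∈ Finset.range N, ‖b i‖ ^ 2 := by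
  induction N with
  | zero => simp
  | succ N ih =>
    rw [Finset.sum_range_succ _ N, Finset.sum_range_succ _ N, Finset.sum_range_succ _ N,
      Finset.sum_range_succ _ N]
    simp only [Complex.sq_norm, Complex.normSq_apply, Complex.add_re,
      Complex.add_im, Complex.mul_re, Complex.conj_re, Complex.conj_im] at ih ⊢
    linear_combination ih

/-- The modulus of a polynomial at a point of the unit circle, through the truncated
inner products with its shifts. -/
theorem norm_eval_sq {M : ℕ} {v : ℂ[X]} (hv : v.natDegree ≤ M) {z : ℂ} (hz : ‖z‖ = 1) :
    ‖v.eval z‖ ^ 2 =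
      2 * (truncInner (M + 1) v
        (v * ∑ k ∈ Finset.range (M + 1), C (starRingEnd ℂ z ^ k) * X ^ k)).re
        - truncNormSq (M + 1) v := by
  have hzz : z * starRingEnd ℂ z = 1 := by simp [Complex.mul_conj', hz]
  rw [eval_eq_sum_range' (Nat.lt_succ_of_le hv), norm_sum_sq]
  congr 1
  · congr 2
    refine Finset.sum_congr rfl fun m hm => ?_
    rw [map_mul, mul_assoc]
    congr 1
    rw [coeff_mul, Finset.Nat.sum_antidiagonal_eq_sum_range_succ_mk, Finset.mul_sum]
    refine Finset.sum_congr rfl fun i hi => ?_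
    have h1 : (∑ k ∈ Finset.range (M + 1),
        C (starRingEnd ℂ z ^ k) * X ^ k : ℂ[X]).coeff (m - i) = starRingEnd ℂ z ^ (m - i) := by
      simp only [finsetSum_coeff, coeff_C_mul_X_pow, Finset.sum_ite_eq, Finset.mem_range]
      rw [if_pos]
      have := Finset.mem_range.1 hm
      omega
    simp only [h1]
    obtain ⟨j, rfl⟩ := Nat.exists_eq_add_of_le (Nat.lt_succ_iff.1 (Finset.mem_range.1 hi))
    have h2 : (z * starRingEnd ℂ z) ^ i = 1 := by rw [hzz, one_pow]
    rw [Nat.add_sub_cancel_left, map_pow, pow_add]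
    linear_combination (v.coeff i * starRingEnd ℂ z ^ j) * h2
  · simp [truncNormSq, hz]

theorem truncInner_congr {N : ℕ} {x x' y y' : ℂ[X]} (hx : ∀ i < N, x.coeff i = x'.coeff i)
    (hy : ∀ i < N, y.coeff i = y'.coeff i) : truncInner N x y = truncInner N x' y' :=
  Finset.sum_congr rfl fun i hi => by
    rw [hx i (Finset.mem_range.1 hi), hy i (Finset.mem_range.1 hi)]

theorem truncNormSq_congr {N : ℕ} {x x' : ℂ[X]} (hx : ∀ i < N, x.coeff i = x'.coeff i) :
    truncNormSq N x = truncNormSq N x' :=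
  Finset.sum_congr rfl fun i hi => by rw [hx i (Finset.mem_range.1 hi)]

theorem coeff_mul_congr {N : ℕ} {x x' : ℂ[X]} (hx : ∀ i < N, x.coeff i = x'.coeff i)
    (y : ℂ[X]) : ∀ i < N, (x * y).coeff i = (x' * y).coeff i := fun i hi => by
  rw [coeff_mul, coeff_mul]
  refine Finset.sum_congr rfl fun j hj => ?_
  rw [hx j.1 (by have := Finset.HasAntidiagonal.mem_antidiagonal.1 hj; omega)]

theorem norm_eval_sq_of_max {M : ℕ} {p x v : ℂ[X]} {σ : ℝ}
    (hmax : ∀ y, truncNormSq (M + 1) (p * y) ≤ σ * truncNormSq (M + 1) y)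
    (hx : truncNormSq (M + 1) (p * x) = σ * truncNormSq (M + 1) x)
    (hxd : x.natDegree ≤ M) (hvd : v.natDegree ≤ M)
    (hv : ∀ i < M + 1, v.coeff i = (p * x).coeff i) {z : ℂ} (hz : ‖z‖ = 1) :
    ‖v.eval z‖ ^ 2 = σ * ‖x.eval z‖ ^ 2 := by
  rw [norm_eval_sq hvd hz, norm_eval_sq hxd hz, truncNormSq_congr hv, hx,
    truncInner_congr hv (coeff_mul_congr hv _), mul_assoc p, truncInner_mul_mul_of_max hmax hx,
    Complex.re_ofReal_mul]
  ring

/-- Truncated multiplication by `p` attains its operator norm. -/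
theorem exists_max (M : ℕ) (p : ℂ[X]) : ∃ σ : ℝ, 0 ≤ σ ∧
    (∀ y, truncNormSq (M + 1) (p * y) ≤ σ * truncNormSq (M + 1) y) ∧
    ∃ x : ℂ[X], x ≠ 0 ∧ x.natDegree ≤ M ∧
      truncNormSq (M + 1) (p * x) = σ * truncNormSq (M + 1) x := by
  let L : EuclideanSpace ℂ (Fin (M + 1)) → ℂ[X] := fun c => ∑ i, C (c i) * X ^ (i : ℕ)
  have hL : ∀ c, ∀ i : Fin (M + 1), (L c).coeff i = c i := by
    intro c i
    simp only [L, finsetSum_coeff, coeff_C_mul_X_pow, Fin.val_inj]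
    simp
  have hLd : ∀ c, (L c).natDegree ≤ M := fun c =>
    natDegree_sum_le_of_forall_le _ _ fun i _ =>
      (natDegree_C_mul_X_pow_le _ _).trans (Nat.lt_succ_iff.1 i.2)
  have hLn : ∀ c, truncNormSq (M + 1) (L c) = ‖c‖ ^ 2 := by
    intro c
    rw [truncNormSq, Finset.sum_range, EuclideanSpace.norm_sq_eq]
    simp [hL]
  have hLs : ∀ y : ℂ[X], ∃ c, ∀ i < M + 1, (L c).coeff i = y.coeff i := fun y =>
    ⟨WithLp.toLp 2 fun i => y.coeff i, fun i hi => hL _ ⟨i, hi⟩⟩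
  have hcont : Continuous fun c => truncNormSq (M + 1) (p * L c) := by
    unfold truncNormSq
    refine continuous_finsetSum _ fun n _ => (Continuous.norm ?_).pow 2
    simp only [L, Finset.mul_sum, finsetSum_coeff, mul_left_comm p, coeff_C_mul]
    fun_prop
  have hsmul : ∀ (r : ℂ) c, L (r • c) = C r * L c := by
    intro r c
    simp [L, Finset.mul_sum, mul_assoc]
  obtain ⟨c, hc, hcmax⟩ := (isCompact_sphere (0 : EuclideanSpace ℂ (Fin (M + 1))) 1).exists_isMaxOn
    (NormedSpace.sphere_nonempty.2 zero_le_one) hcont.continuousOn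
  have hc1 : ‖c‖ = 1 := by simpa using hc
  refine ⟨truncNormSq (M + 1) (p * L c), truncNormSq_nonneg _ _, fun y => ?_, L c, ?_, hLd c, ?_⟩
  · obtain ⟨d, hd⟩ := hLs y
    rw [← truncNormSq_congr hd, mul_comm p y, ← truncNormSq_congr (coeff_mul_congr hd p), hLn,
      mul_comm _ p]
    by_cases hd0 : d = 0
    · have : L d = 0 := by simp [hd0, L]
      rw [this, mul_zero, hd0, norm_zero]
      simp [truncNormSq]
    have hdn : 0 < ‖d‖ := norm_pos_iff.2 hd0
    set e : EuclideanSpace ℂ (Fin (M + 1)) := ((‖d‖⁻¹ : ℝ) : ℂ) • d with he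
    have he1 : e ∈ sphere (0 : EuclideanSpace ℂ (Fin (M + 1))) 1 := by
      rw [mem_sphere_zero_iff_norm, he, norm_smul, Complex.norm_real, norm_inv, norm_norm,
        inv_mul_cancel₀ hdn.ne']
    have h1 : truncNormSq (M + 1) (p * L e) ≤ truncNormSq (M + 1) (p * L c) := hcmax he1
    rw [he, hsmul, mul_left_comm, truncNormSq_C_mul, Complex.norm_real, norm_inv, norm_norm,
      inv_pow, inv_mul_le_iff₀ (by positivity)] at h1
    linarith
  · intro h
    have := hLn c
    rw [h, hc1] at this
    simp [truncNormSq] at this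
  · rw [hLn, hc1]
    ring

theorem exists_max_ne_zero (M : ℕ) (p : ℂ[X]) : ∃ (s : ℝ) (x v : ℂ[X]), 0 ≤ s ∧ x ≠ 0 ∧
    (∀ z ∈ ball (0 : ℂ) 1, x.eval z ≠ 0) ∧ v.natDegree ≤ M ∧ X ^ (M + 1) ∣ v - p * x ∧
    ∀ z ∈ sphere (0 : ℂ) 1, ‖v.eval z‖ = s * ‖x.eval z‖ := by
  obtain ⟨σ, hσ, hmax, hex⟩ := exists_max M p
  obtain ⟨x, ⟨hx0, hxd, hx⟩, hmin⟩ := exists_minimalFor_of_wellFoundedLT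
    (fun x : ℂ[X] => x ≠ 0 ∧ x.natDegree ≤ M ∧
      truncNormSq (M + 1) (p * x) = σ * truncNormSq (M + 1) x) natDegree hex
  have hvd : (p * x %ₘ X ^ (M + 1)).natDegree ≤ M := by
    have h := natDegree_modByMonic_lt (p * x) (monic_X_pow (M + 1)) (by
      intro h
      have := congrArg natDegree h
      simp at this)
    rw [natDegree_X_pow] at h
    omega
  have hdvd : X ^ (M + 1) ∣ (p * x %ₘ X ^ (M + 1)) - p * x := by
    rw [modByMonic_eq_sub_mul_div]
    exact ⟨-(p * x /ₘ X ^ (M + 1)), by ring⟩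
  refine ⟨√σ, x, p * x %ₘ X ^ (M + 1), Real.sqrt_nonneg _, hx0, fun a ha hxa => ?_, hvd, hdvd,
    fun z hz => ?_⟩
  · obtain ⟨k, hk⟩ := dvd_iff_isRoot.2 hxa
    have hk0 : k ≠ 0 := by
      rintro rfl
      exact hx0 (by simpa using hk)
    have hkd : x.natDegree = k.natDegree + 1 := by
      rw [hk, natDegree_mul (X_sub_C_ne_zero a) hk0, natDegree_X_sub_C, add_comm]
    have h1 := max_of_max_X_sub_C_mul hmax (hk ▸ hx)
      (coeff_eq_zero_of_natDegree_lt (by omega)) (mem_ball_zero_iff.1 ha)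
    have h2 := hmin ⟨hk0, by omega, h1⟩ (by omega)
    omega
  · have hv : ∀ i < M + 1, (p * x %ₘ X ^ (M + 1)).coeff i = (p * x).coeff i := fun i hi => by
      have h := X_pow_dvd_iff.1 hdvd i hi
      rwa [coeff_sub, sub_eq_zero] at h
    have h := norm_eval_sq_of_max hmax hx hxd hvd hv (mem_sphere_zero_iff_norm.1 hz)
    rw [← Real.sqrt_sq (norm_nonneg _), h, Real.sqrt_mul hσ, Real.sqrt_sq (norm_nonneg _)]

theorem eqOn_circle_of_eqOn_punctured {φ ψ : ℂ → ℝ} (hφ : Continuous φ) (hψ : Continuous ψ)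
    {a : ℂ} (ha : ‖a‖ = 1) (h : ∀ z ∈ sphere (0 : ℂ) 1, z ≠ a → φ z = ψ z) :
    ∀ z ∈ sphere (0 : ℂ) 1, φ z = ψ z := by
  intro z hz
  by_cases hza : z = a
  swap
  · exact h z hz hza
  subst hza
  have h1 : Set.EqOn (fun t : ℝ => φ (z * Complex.exp (t * Complex.I)))
      (fun t : ℝ => ψ (z * Complex.exp (t * Complex.I))) (Set.Ioo 0 1) := by
    intro t ht
    refine h _ (by simp [ha, Complex.norm_exp_ofReal_mul_I]) fun he => ?_
    have hz0 : z ≠ 0 := norm_ne_zero_iff.1 (by rw [ha]; exact one_ne_zero)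
    have h2 : Complex.exp (t * Complex.I) = 1 := by
      rw [mul_eq_left₀ hz0] at he
      exact he
    have h3 := congrArg Complex.im h2
    rw [Complex.exp_ofReal_mul_I_im, Complex.one_im] at h3
    exact (Real.sin_pos_of_pos_of_lt_pi ht.1 (by linarith [ht.2, Real.pi_gt_three])).ne' h3
  have h4 := h1.closure (by fun_prop) (by fun_prop)
  rw [closure_Ioo zero_ne_one] at h4
  simpa using h4 (Set.left_mem_Icc.2 zero_le_one)

/-- The solution of the Carathéodory–Fejér problem: a polynomial `p` agrees to order `M + 1`
at the origin with a rational function `v / x` of constant modulus on the unit circle, regular on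
the closed disc, with at most `M` zeros. -/
theorem caratheodory_fejer (M : ℕ) (p : ℂ[X]) : ∃ (s : ℝ) (x v : ℂ[X]), 0 ≤ s ∧
    (∀ z ∈ closedBall (0 : ℂ) 1, x.eval z ≠ 0) ∧ v.natDegree ≤ M ∧ X ^ (M + 1) ∣ v - p * x ∧
    ∀ z ∈ sphere (0 : ℂ) 1, ‖v.eval z‖ = s * ‖x.eval z‖ := by
  obtain ⟨s, x₀, v₀, hs, h⟩ := exists_max_ne_zero M p
  obtain ⟨⟨x, v⟩, ⟨hx0, hxb, hvd, hdvd, hn⟩, hmin⟩ := exists_minimalFor_of_wellFoundedLT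
    (fun q : ℂ[X] × ℂ[X] => q.1 ≠ 0 ∧
    (∀ z ∈ ball (0 : ℂ) 1, q.1.eval z ≠ 0) ∧ q.2.natDegree ≤ M ∧ X ^ (M + 1) ∣ q.2 - p * q.1 ∧
    ∀ z ∈ sphere (0 : ℂ) 1, ‖q.2.eval z‖ = s * ‖q.1.eval z‖) (fun q => q.1.natDegree)
    ⟨(x₀, v₀), h⟩
  simp only at hx0 hxb hvd hdvd hn
  refine ⟨s, x, v, hs, fun a ha hxa => ?_, hvd, hdvd, hn⟩
  have ha1 : ‖a‖ = 1 := by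
    by_contra hne
    exact hxb a (mem_ball_zero_iff.2 (lt_of_le_of_ne (mem_closedBall_zero_iff.1 ha) hne)) hxa
  have hva : v.IsRoot a := by
    have := hn a (mem_sphere_zero_iff_norm.2 ha1)
    rw [hxa, norm_zero, mul_zero, norm_eq_zero] at this
    exact this
  obtain ⟨k, rfl⟩ := dvd_iff_isRoot.2 (show x.IsRoot a from hxa)
  obtain ⟨l, rfl⟩ := dvd_iff_isRoot.2 hva
  have hk0 : k ≠ 0 := right_ne_zero_of_mul hx0
  have hkd : ((X - C a) * k).natDegree = k.natDegree + 1 := by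
    rw [natDegree_mul (X_sub_C_ne_zero a) hk0, natDegree_X_sub_C, add_comm]
  have hld : l.natDegree ≤ M := by
    by_cases hl : l = 0
    · simp [hl]
    rw [natDegree_mul (X_sub_C_ne_zero a) hl, natDegree_X_sub_C] at hvd
    omega
  have hco : IsCoprime (X ^ (M + 1) : ℂ[X]) (X - C a) := by
    have ha0 : (0 : ℂ) ≠ a := fun h => by simp [← h] at ha1
    have := (pairwise_coprime_X_sub_C (K := ℂ) Function.injective_id ha0).pow_left (m := M + 1)
    simpa using this
  have hdvd' : X ^ (M + 1) ∣ l - p * k := by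
    refine hco.dvd_of_dvd_mul_left (?_ : _ ∣ (X - C a) * (l - p * k))
    convert hdvd using 1
    ring
  have hn' := eqOn_circle_of_eqOn_punctured (φ := fun z => ‖l.eval z‖)
    (ψ := fun z => s * ‖k.eval z‖) (by fun_prop) (by fun_prop) ha1 fun z hz hza => by
      have h1 := hn z hz
      simp only [eval_mul, eval_sub, eval_X, eval_C, norm_mul] at h1
      have h2 : ‖z - a‖ ≠ 0 := by simpa [sub_eq_zero] using hza
      exact mul_left_cancel₀ h2 (by linarith)
  have := hmin (j := (k, l)) ⟨hk0, fun z hz h => hxb z hz (by simp [h]), hld, hdvd', hn'⟩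
    (by simp only; omega)
  simp only at this
  omega

/-- A function holomorphic past the closed unit disc is uniformly approximable by polynomials. -/
theorem exists_polynomial_near_of_differentiableOn {G : ℂ → ℂ} {R : NNReal} (hR : 1 < R)
    (hG : DifferentiableOn ℂ G (closedBall 0 R)) {ε : ℝ} (hε : 0 < ε) :
    ∃ P : ℂ[X], ∀ z ∈ closedBall (0 : ℂ) 1, ‖G z - P.eval z‖ < ε := by
  have h := hG.hasFPowerSeriesOnBall (zero_lt_one.trans hR)
  obtain ⟨r, hr1, hrR⟩ := exists_between hR
  have hu := h.tendstoUniformlyOn (r' := r) (by exact_mod_cast hrR)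
  obtain ⟨n, hn⟩ := (Metric.tendstoUniformlyOn_iff.1 hu ε hε).exists
  refine ⟨∑ k ∈ Finset.range n, C ((cauchyPowerSeries G 0 R).coeff k) * X ^ k, fun z hz => ?_⟩
  have hz' : z ∈ ball (0 : ℂ) r := by
    rw [mem_ball_zero_iff]
    exact (mem_closedBall_zero_iff.1 hz).trans_lt (by exact_mod_cast hr1)
  have := hn z hz'
  rw [dist_eq_norm, zero_add] at this
  have h1 : (∑ k ∈ Finset.range n, C ((cauchyPowerSeries G 0 R).coeff k) * X ^ k : ℂ[X]).eval z =
      (cauchyPowerSeries G 0 R).partialSum n z := by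
    rw [eval_finsetSum, FormalMultilinearSeries.partialSum]
    refine Finset.sum_congr rfl fun k _ => ?_
    rw [FormalMultilinearSeries.apply_eq_pow_smul_coeff, eval_C_mul, eval_X_pow, smul_eq_mul,
      mul_comm]
  rwa [h1]

theorem exists_polynomial_near_of_extendsHolo {f : ℂ → ℂ} (hf : ExtendsHolo f) {ε : ℝ}
    (hε : 0 < ε) : ∃ P : ℂ[X], ∀ z ∈ sphere (0 : ℂ) 1, ‖f z - P.eval z‖ < ε := by
  obtain ⟨F, hFc, hFd, hFf⟩ := hf
  have hu := (isCompact_closedBall (0 : ℂ) 1).uniformContinuousOn_of_continuous hFc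
  obtain ⟨δ, hδ, hd⟩ := Metric.uniformContinuousOn_iff.1 hu (ε / 2) (half_pos hε)
  obtain ⟨R, hR1, hRδ⟩ := exists_between (show (1 : NNReal) < 1 + ⟨δ, hδ.le⟩ from
    lt_add_of_pos_right _ hδ)
  obtain ⟨R', hR'1, hR'R⟩ := exists_between hR1
  have hR0 : (0 : ℝ) < R := zero_lt_one.trans (by exact_mod_cast hR1)
  have hRR : (1 : ℝ) < R := by exact_mod_cast hR1
  have hG : DifferentiableOn ℂ (fun z => F (z / R)) (closedBall 0 R') := by
    refine hFd.comp (by fun_prop) fun z hz => ?_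
    rw [mem_ball_zero_iff, norm_div, div_lt_one (by simpa using hR0)]
    simpa using (mem_closedBall_zero_iff.1 hz).trans_lt (by exact_mod_cast hR'R)
  obtain ⟨P, hP⟩ := exists_polynomial_near_of_differentiableOn hR'1 hG (half_pos hε)
  refine ⟨P, fun z hz => ?_⟩
  have hz1 : ‖z‖ = 1 := mem_sphere_zero_iff_norm.1 hz
  have hzR : ‖z / (R : ℂ)‖ ≤ 1 := by
    rw [norm_div, hz1, div_le_one (by simpa using hR0)]
    simpa using hRR.le
  have hR0' : (R : ℂ) ≠ 0 := by exact_mod_cast hR0.ne'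
  have hlt : (R : ℝ) < 1 + δ := by exact_mod_cast hRδ
  have h1 := hd z (sphere_subset_closedBall hz) (z / R) (mem_closedBall_zero_iff.2 hzR) (by
    have : z - z / R = z * (((R - 1) / R : ℝ) : ℂ) := by
      push_cast
      field_simp
    rw [dist_eq_norm, this, norm_mul, hz1, one_mul, Complex.norm_real,
      Real.norm_of_nonneg (div_nonneg (by linarith) hR0.le), div_lt_iff₀ hR0]
    nlinarith)
  rw [dist_eq_norm, hFf z hz] at h1
  calc ‖f z - P.eval z‖ = ‖(f z - F (z / R)) + (F (z / R) - P.eval z)‖ := by rw [sub_add_sub_cancel]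
    _ ≤ _ := norm_add_le _ _
    _ < ε / 2 + ε / 2 := add_lt_add h1 (hP z (sphere_subset_closedBall hz))
    _ = ε := add_halves ε

theorem norm_eval_le_of_sphere {P : ℂ[X]} {c : ℝ}
    (h : ∀ z ∈ sphere (0 : ℂ) 1, ‖P.eval z‖ ≤ c) : ∀ z ∈ closedBall (0 : ℂ) 1, ‖P.eval z‖ ≤ c := by
  intro z hz
  refine Complex.norm_le_of_forall_mem_frontier_norm_le (U := ball (0 : ℂ) 1) isBounded_ball
    (f := fun z => P.eval z) P.differentiable.diffContOnCl ?_ ?_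
  · rwa [frontier_ball _ one_ne_zero]
  · rwa [closure_ball _ one_ne_zero]

theorem extendsHolo_of_polynomial_near {f : ℂ → ℂ}
    (h : ∀ ε > 0, ∃ P : ℂ[X], ∀ z ∈ sphere (0 : ℂ) 1, ‖f z - P.eval z‖ ≤ ε) : ExtendsHolo f := by
  choose! P hP using h
  obtain ⟨u, -, hu0, hu⟩ := exists_seq_strictAnti_tendsto (0 : ℝ)
  have hcauchy : UniformCauchySeqOn (fun n z => (P (u n)).eval z) Filter.atTop
      (closedBall (0 : ℂ) 1) := by
    rw [Metric.uniformCauchySeqOn_iff]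
    intro ε hε
    obtain ⟨N, hN⟩ := Filter.eventually_atTop.1 (hu.eventually (gt_mem_nhds (half_pos hε)))
    refine ⟨N, fun m hm n hn z hz => ?_⟩
    rw [dist_eq_norm, ← eval_sub]
    refine (norm_eval_le_of_sphere (c := u n + u m) (fun w hw => ?_) z hz).trans_lt
      (by linarith [hN m hm, hN n hn])
    have : (P (u m) - P (u n)).eval w =
        (f w - (P (u n)).eval w) - (f w - (P (u m)).eval w) := by
      rw [eval_sub]; ring
    rw [this]
    exact (norm_sub_le _ _).trans (add_le_add (hP _ (hu0 n) w hw) (hP _ (hu0 m) w hw))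
  have hlim : ∀ z ∈ closedBall (0 : ℂ) 1, ∃ w,
      Filter.Tendsto (fun n => (P (u n)).eval z) Filter.atTop (nhds w) := fun z hz =>
    cauchySeq_tendsto_of_complete (hcauchy.cauchySeq hz)
  choose! F hF using hlim
  have hunif := hcauchy.tendstoUniformlyOn_of_tendsto hF
  refine ⟨F, hunif.continuousOn (Filter.Frequently.of_forall fun n => (P (u n)).continuousOn), ?_,
    fun z hz => tendsto_nhds_unique (hF z (sphere_subset_closedBall hz)) ?_⟩
  · exact (hunif.mono ball_subset_closedBall).tendstoLocallyUniformlyOn.differentiableOn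
      (Filter.Eventually.of_forall fun n => (P (u n)).differentiable.differentiableOn) isOpen_ball
  · rw [tendsto_iff_norm_sub_tendsto_zero]
    refine squeeze_zero (fun _ => norm_nonneg _) (fun n => ?_) hu
    rw [norm_sub_rev]
    exact hP _ (hu0 n) z hz

/-- Density of the trigonometric polynomials in the continuous functions on the circle. -/
theorem exists_laurent_near {f : ℂ → ℂ} (hf : ContinuousOn f (sphere (0 : ℂ) 1)) {ε : ℝ}
    (hε : 0 < ε) : ∃ (M : ℕ) (p : ℂ[X]), ∀ z ∈ sphere (0 : ℂ) 1,
      ‖f z - p.eval z / z ^ (M + 1)‖ < ε := by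
  have hz0 : ∀ z : sphere (0 : ℂ) 1, (z : ℂ) ≠ 0 := fun z => by
    simpa using ne_of_mem_sphere z.2 one_ne_zero
  have key : ∀ g ∈ (polynomialFunctions (sphere (0 : ℂ) 1)).starClosure,
      ∃ (M : ℕ) (p : ℂ[X]), ∀ z : sphere (0 : ℂ) 1, g z * (z : ℂ) ^ M = p.eval (z : ℂ) := by
    intro g hg
    rw [polynomialFunctions.starClosure_eq_adjoin_X, ← StarSubalgebra.mem_toSubalgebra,
      StarAlgebra.adjoin_toSubalgebra] at hg
    induction hg using Algebra.adjoin_induction with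
    | mem g hg =>
      rcases hg with hg | hg
      · rw [Set.mem_singleton_iff] at hg
        exact ⟨0, X, fun z => by simp [hg]⟩
      · rw [Set.star_singleton, Set.mem_singleton_iff] at hg
        refine ⟨1, 1, fun z => ?_⟩
        simp [hg, Complex.conj_mul']
    | algebraMap r => exact ⟨0, C r, fun z => by simp⟩
    | add g h _ _ ihg ihh =>
      obtain ⟨M, p, hp⟩ := ihg
      obtain ⟨N, q, hq⟩ := ihh
      refine ⟨M + N, p * X ^ N + q * X ^ M, fun z => ?_⟩
      simp only [eval_add, eval_mul, eval_pow, eval_X, ← hp, ← hq, ContinuousMap.add_apply]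
      ring
    | mul g h _ _ ihg ihh =>
      obtain ⟨M, p, hp⟩ := ihg
      obtain ⟨N, q, hq⟩ := ihh
      refine ⟨M + N, p * q, fun z => ?_⟩
      simp only [eval_mul, ← hp, ← hq, ContinuousMap.mul_apply]
      ring
  let F : C(sphere (0 : ℂ) 1, ℂ) := ⟨fun z => f z, continuousOn_iff_continuous_domRestrict.1 hf⟩
  have hF : F ∈ (polynomialFunctions (sphere (0 : ℂ) 1)).starClosure.topologicalClosure := by
    rw [polynomialFunctions.starClosure_topologicalClosure]
    trivial
  rw [← SetLike.mem_coe, StarSubalgebra.topologicalClosure_coe] at hF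
  obtain ⟨g, hg, hgF⟩ := Metric.mem_closure_iff.1 hF ε hε
  obtain ⟨M, p, hp⟩ := key g hg
  refine ⟨M, p * X, fun z hz => ?_⟩
  have h1 : (p * X).eval z / z ^ (M + 1) = g ⟨z, hz⟩ := by
    have h2 := hp ⟨z, hz⟩
    have h3 : z ≠ 0 := hz0 ⟨z, hz⟩
    rw [eval_mul, eval_X, ← h2]
    field_simp
    ring
  rw [h1, ← dist_eq_norm]
  exact (ContinuousMap.dist_apply_le_dist (f := F) (g := g) ⟨z, hz⟩).trans_lt hgF

/-- A quotient of polynomials with no pole in the closed disc is a uniform limit of polynomials. -/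
theorem exists_polynomial_near_div (r x : ℂ[X]) (hx : ∀ z ∈ closedBall (0 : ℂ) 1, x.eval z ≠ 0)
    {ε : ℝ} (hε : 0 < ε) :
    ∃ P : ℂ[X], ∀ z ∈ closedBall (0 : ℂ) 1, ‖r.eval z / x.eval z - P.eval z‖ < ε := by
  obtain ⟨δ, hδ, hsub⟩ := (isCompact_closedBall (0 : ℂ) 1).exists_cthickening_subset_open
    (x.continuous.isOpen_preimage {0}ᶜ isOpen_compl_singleton) hx
  rw [cthickening_closedBall hδ.le zero_le_one] at hsub
  have hR : (1 : NNReal) < ⟨δ, hδ.le⟩ + 1 := lt_add_of_pos_left _ hδ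
  exact exists_polynomial_near_of_differentiableOn hR
    (r.differentiable.differentiableOn.div x.differentiable.differentiableOn hsub) hε

theorem winding_nonneg_of_extendsHolo {f : ℂ → ℂ} (hf : ContinuousOn f (sphere (0 : ℂ) 1))
    (hext : ExtendsHolo f) (P : ℂ[X]) (hP : ∀ z ∈ sphere (0 : ℂ) 1, f z + P.eval z ≠ 0)
    {n : ℤ} (hn : HasWindingNumber (fun z => f z + P.eval z) n) : 0 ≤ n := by
  have hc : ContinuousOn (fun z => f z + P.eval z) (sphere (0 : ℂ) 1) := hf.add P.continuousOn
  obtain ⟨w, hw, hwmin⟩ := (isCompact_sphere (0 : ℂ) 1).exists_isMinOn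
    (NormedSpace.sphere_nonempty.2 zero_le_one) hc.norm
  obtain ⟨Q, hQ⟩ := exists_polynomial_near_of_extendsHolo hext (norm_pos_iff.2 (hP w hw))
  have hlt : ∀ z ∈ sphere (0 : ℂ) 1, ‖(Q + P).eval z - (f z + P.eval z)‖ < ‖f z + P.eval z‖ := by
    intro z hz
    have h1 : (Q + P).eval z - (f z + P.eval z) = -(f z - Q.eval z) := by rw [eval_add]; ring
    rw [h1, norm_neg]
    exact (hQ z hz).trans_le (hwmin hz)
  have hQP : ∀ z ∈ sphere (0 : ℂ) 1, (Q + P).eval z ≠ 0 := fun z hz h => by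
    have := hlt z hz
    rw [h, zero_sub, norm_neg] at this
    exact this.false
  have h2 := hn.of_norm_sub_lt hc (Q + P).continuousOn hlt
  rw [h2.unique (.polynomial _ hQP) hQP]
  positivity

theorem extendsHolo_of_winding_nonneg {f : ℂ → ℂ} (hf : ContinuousOn f (sphere (0 : ℂ) 1))
    (h : ∀ P : ℂ[X], (∀ z ∈ sphere (0 : ℂ) 1, f z + P.eval z ≠ 0) →
      ∀ n : ℤ, HasWindingNumber (fun z => f z + P.eval z) n → 0 ≤ n) : ExtendsHolo f := by
  refine extendsHolo_of_polynomial_near fun ε hε => ?_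
  have hε4 : 0 < ε / 4 := by positivity
  obtain ⟨M, p, hp⟩ := exists_laurent_near hf hε4
  obtain ⟨s, x, v, hs, hx, hvd, ⟨r, hr⟩, hn⟩ := caratheodory_fejer M p
  obtain ⟨P, hP⟩ := exists_polynomial_near_div r x hx hε4
  have hx' : ∀ z ∈ sphere (0 : ℂ) 1, x.eval z ≠ 0 := fun z hz => hx z (sphere_subset_closedBall hz)
  have hz0 : ∀ z ∈ sphere (0 : ℂ) 1, z ^ (M + 1) ≠ 0 := fun z hz =>
    pow_ne_zero _ (by simpa using ne_of_mem_sphere hz one_ne_zero)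
  set B : ℂ → ℂ := fun z => v.eval z * ((z ^ (M + 1))⁻¹ * (x.eval z)⁻¹) with hB
  have hBn : ∀ z ∈ sphere (0 : ℂ) 1, ‖B z‖ = s := fun z hz => by
    have h1 : ‖x.eval z‖ ≠ 0 := norm_ne_zero_iff.2 (hx' z hz)
    rw [hB]
    simp only [norm_mul, norm_inv, norm_pow, hn z hz, mem_sphere_zero_iff_norm.1 hz]
    field_simp
    simp
  have hBc : ContinuousOn B (sphere (0 : ℂ) 1) :=
    v.continuousOn.mul (((continuous_pow _).continuousOn.inv₀ hz0).mul (x.continuousOn.inv₀ hx'))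
  have hfB : ∀ z ∈ sphere (0 : ℂ) 1, ‖f z + P.eval z - B z‖ < ε / 2 := fun z hz => by
    have h1 := hx' z hz
    have h2 := hz0 z hz
    have h3 : v.eval z = p.eval z * x.eval z + z ^ (M + 1) * r.eval z := by
      have := congrArg (eval z) hr
      simp only [eval_sub, eval_mul, eval_pow, eval_X] at this
      linear_combination this
    have h4 : f z + P.eval z - B z =
        (f z - p.eval z / z ^ (M + 1)) - (r.eval z / x.eval z - P.eval z) := by
      simp only [hB, h3]
      field_simp
      ring
    rw [h4]
    have := norm_sub_le (f z - p.eval z / z ^ (M + 1)) (r.eval z / x.eval z - P.eval z)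
    linarith [hp z hz, hP z (sphere_subset_closedBall hz)]
  rcases le_or_gt s (ε / 2) with hsε | hsε
  · refine ⟨-P, fun z hz => ?_⟩
    have h1 : f z - (-P).eval z = (f z + P.eval z - B z) + B z := by simp
    rw [h1]
    have := norm_add_le (f z + P.eval z - B z) (B z)
    linarith [hfB z hz, hBn z hz]
  · exfalso
    have hs0 : 0 < s := by linarith
    have hlt : ∀ z ∈ sphere (0 : ℂ) 1, ‖f z + P.eval z - B z‖ < ‖B z‖ := fun z hz => by
      rw [hBn z hz]
      exact (hfB z hz).trans hsε
    have hv : ∀ z ∈ sphere (0 : ℂ) 1, v.eval z ≠ 0 := fun z hz hvz => by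
      have := hn z hz
      rw [hvz, norm_zero] at this
      exact (mul_pos hs0 (norm_pos_iff.2 (hx' z hz))).ne this
    have hBw := (HasWindingNumber.polynomial v hv).mul
      ((HasWindingNumber.id.pow (M + 1)).inv.mul (HasWindingNumber.polynomial x hx').inv)
    have hxr : x.roots.filter (fun a => ‖a‖ < 1) = 0 := by
      rw [Multiset.filter_eq_nil]
      exact fun a ha hlt =>
        hx a (mem_closedBall_zero_iff.2 hlt.le) (isRoot_of_mem_roots ha)
    have hvr : Multiset.card (v.roots.filter fun a => ‖a‖ < 1) ≤ M :=
      (Multiset.card_le_card (Multiset.filter_le _ _)).trans ((card_roots' v).trans hvd)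
    have h0 := h P (fun z hz h0 => by
      have := hlt z hz
      rw [h0, zero_sub, norm_neg] at this
      exact this.false) _ (hBw.of_norm_sub_lt hBc (hf.add P.continuousOn) hlt)
    rw [hxr] at h0
    push_cast [Multiset.card_zero] at h0
    omega

theorem stmt7 (f : ℂ → ℂ) (hf : ContinuousOn f (sphere (0:ℂ) 1)) :
    ExtendsHolo f ↔
      ∀ P : Polynomial ℂ, (∀ z ∈ sphere (0:ℂ) 1, f z + P.eval z ≠ 0) →
        ∀ n : ℤ, HasWindingNumber (fun z => f z + P.eval z) n → 0 ≤ n :=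
  ⟨fun hext P hP _ hn => winding_nonneg_of_extendsHolo hf hext P hP hn,
    extendsHolo_of_winding_nonneg hf⟩
end

section
/- Let f be a continuous function on the unit circle bΔ that does not extend holomorphically through the open unit disc. Then there exists a two-variable polynomial Q such that z ↦ Q(z, f(z)) is nonvanishing on bΔ and the winding number of z ↦ Q(z, f(z)) around 0 is negative (in fact equals −1). -/
open Polynomial Metric
open scoped Classical

open scoped ComplexConjugate

/-- If `z * g z` has positive real part on the unit circle, then `g` has winding number `-1`. -/
lemma hasWindingNumber_neg_one_of_re_mul_pos {g : ℂ → ℂ} (hg : ContinuousOn g (sphere (0 : ℂ) 1))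
    (hre : ∀ z ∈ sphere (0 : ℂ) 1, 0 < (z * g z).re) : HasWindingNumber g (-1) := by
  have hmem (θ : ℝ) : Complex.exp (θ * Complex.I) ∈ sphere (0 : ℂ) 1 := by
    simp [Complex.norm_exp_ofReal_mul_I]
  have hexp : Continuous fun θ : ℝ => Complex.exp (θ * Complex.I) := by fun_prop
  have hk : Continuous fun θ : ℝ =>
      Complex.exp (θ * Complex.I) * g (Complex.exp (θ * Complex.I)) :=
    hexp.mul (hg.comp_continuous hexp hmem)
  refine ⟨fun θ => (Complex.exp (θ * Complex.I) * g (Complex.exp (θ * Complex.I))).arg - θ,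
    ?_, fun θ => ?_, ?_⟩
  · refine Continuous.sub (continuous_iff_continuousAt.2 fun θ => ?_) continuous_id
    exact ContinuousAt.comp (g := Complex.arg)
      (f := fun θ : ℝ => Complex.exp (θ * Complex.I) * g (Complex.exp (θ * Complex.I)))
      (Complex.continuousAt_arg (Or.inl (hre _ (hmem θ)))) hk.continuousAt
  · have h := Complex.norm_mul_exp_arg_mul_I
      (Complex.exp (θ * Complex.I) * g (Complex.exp (θ * Complex.I)))
    rw [norm_mul, Complex.norm_exp_ofReal_mul_I, one_mul] at h
    push_cast
    rw [sub_mul, Complex.exp_sub, mul_div_assoc', h, mul_div_cancel_left₀ _ (Complex.exp_ne_zero _)]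
  · have h : Complex.exp ((2 * Real.pi : ℝ) * Complex.I) = Complex.exp ((0 : ℝ) * Complex.I) := by
      push_cast
      rw [Complex.exp_two_pi_mul_I]; simp
    simp only [h]
    push_cast
    ring

lemma eval_aeval_X_zero (p : ℂ[X]) (z w : ℂ) :
    MvPolynomial.eval ![z, w] (Polynomial.aeval (MvPolynomial.X 0 : MvPolynomial (Fin 2) ℂ) p) =
      p.eval z := by
  induction p using Polynomial.induction_on' with
  | add p q hp hq => simp [hp, hq]
  | monomial n a => simp [Polynomial.aeval_monomial, MvPolynomial.algebraMap_eq]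

/-- Every continuous function on the unit circle is a uniform limit of functions `p + conj q`
with `p`, `q` polynomials. -/
lemma exists_polynomial_add_conj_approx {f : ℂ → ℂ} (hf : ContinuousOn f (sphere (0 : ℂ) 1))
    {ε : ℝ} (hε : 0 < ε) :
    ∃ p q : ℂ[X], q.coeff 0 = 0 ∧
      ∀ z ∈ sphere (0 : ℂ) 1, ‖f z - (p.eval z + conj (q.eval z))‖ < ε := by
  have : Fact (0 < 2 * Real.pi) := ⟨Real.two_pi_pos⟩
  have hmem (x : AddCircle (2 * Real.pi)) : (AddCircle.toCircle x : ℂ) ∈ sphere (0 : ℂ) 1 :=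
    mem_sphere_zero_iff_norm.2 (Circle.norm_coe _)
  let F : C(AddCircle (2 * Real.pi), ℂ) :=
    ⟨fun x => f (AddCircle.toCircle x),
      hf.comp_continuous (continuous_subtype_val.comp AddCircle.continuous_toCircle) hmem⟩
  have hF : F ∈ closure (Submodule.span ℂ (Set.range (@fourier (2 * Real.pi))) : Set _) := by
    rw [← Submodule.topologicalClosure_coe, span_fourier_closure_eq_top]
    trivial
  obtain ⟨T, hT, hFT⟩ := Metric.mem_closure_iff.1 hF ε hε
  have key : ∃ p q : ℂ[X], ∀ x, T x = p.eval (AddCircle.toCircle x : ℂ) +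
      conj (q.eval (AddCircle.toCircle x : ℂ)) := by
    clear hFT
    induction hT using Submodule.span_induction with
    | mem T hT =>
      obtain ⟨n, rfl⟩ := hT
      obtain ⟨m, rfl | rfl⟩ := n.eq_nat_or_neg
      · exact ⟨X ^ m, 0, fun x => by simp [fourier_apply, AddCircle.toCircle_nsmul]⟩
      · refine ⟨0, X ^ m, fun x => ?_⟩
        rw [fourier_neg]
        simp [fourier_apply, AddCircle.toCircle_nsmul]
    | zero => exact ⟨0, 0, by simp⟩
    | add S T _ _ hS hT =>
      obtain ⟨p, q, h⟩ := hS
      obtain ⟨p', q', h'⟩ := hT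
      exact ⟨p + p', q + q', fun x => by simp [h, h']; ring⟩
    | smul a T _ hT =>
      obtain ⟨p, q, h⟩ := hT
      exact ⟨C a * p, C (conj a) * q, fun x => by simp [h]; ring⟩
  obtain ⟨p, q, h⟩ := key
  refine ⟨p + C (conj (q.coeff 0)), q - C (q.coeff 0), by simp, fun z hz => ?_⟩
  have hz' : ‖z‖ = 1 := by simpa using hz
  obtain ⟨x, hx⟩ := (AddCircle.homeomorphCircle (T := 2 * Real.pi) Real.two_pi_pos.ne').surjective
    ⟨z, mem_sphere_zero_iff_norm.2 hz'⟩
  have hx' : (AddCircle.toCircle x : ℂ) = z := by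
    rw [← AddCircle.homeomorphCircle_apply Real.two_pi_pos.ne', hx]
  have hd := (ContinuousMap.dist_apply_le_dist x).trans_lt hFT
  rw [h x, dist_eq_norm] at hd
  simp only [F, ContinuousMap.coe_mk, hx'] at hd
  have he : (p + C (conj (q.coeff 0))).eval z + conj ((q - C (q.coeff 0)).eval z) =
      p.eval z + conj (q.eval z) := by
    simp
  rwa [he]

/-- On the unit circle, the conjugate of `q` times `z ^ n` has constant term `conj (q.coeff n)`. -/
lemma exists_pow_mul_conj_eval_eq (q : ℂ[X]) (n : ℕ) :
    ∃ A B : ℂ[X], ∀ z : ℂ, ‖z‖ = 1 →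
      z ^ n * conj (q.eval z) =
        z * A.eval z + conj (q.coeff n) + conj (z * B.eval z) := by
  induction q using Polynomial.induction_on' with
  | add p q hp hq =>
    obtain ⟨A, B, h⟩ := hp
    obtain ⟨A', B', h'⟩ := hq
    refine ⟨A + A', B + B', fun z hz => ?_⟩
    simp only [eval_add, map_add, mul_add, coeff_add, h z hz, h' z hz]
    ring
  | monomial m a =>
    have hz1 (z : ℂ) (hz : ‖z‖ = 1) (k : ℕ) : z ^ k * conj z ^ k = 1 := by
      rw [← mul_pow, Complex.mul_conj']
      simp [hz]
    rcases lt_trichotomy m n with h | rfl | h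
    · obtain ⟨k, rfl⟩ := Nat.exists_eq_add_of_lt h
      refine ⟨C (conj a) * X ^ k, 0, fun z hz => ?_⟩
      simp only [eval_monomial, map_mul, map_pow, coeff_monomial, h.ne, if_false, eval_mul,
        eval_C, eval_pow, eval_X, eval_zero, mul_zero, map_zero, add_zero]
      linear_combination conj a * z ^ (k + 1) * hz1 z hz m
    · refine ⟨0, 0, fun z hz => ?_⟩
      simp only [eval_monomial, map_mul, map_pow, coeff_monomial, if_true, eval_zero, mul_zero,
        map_zero, add_zero, zero_add]
      linear_combination conj a * hz1 z hz m
    · obtain ⟨k, rfl⟩ := Nat.exists_eq_add_of_lt h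
      refine ⟨0, C a * X ^ k, fun z hz => ?_⟩
      simp only [eval_monomial, map_mul, map_pow, coeff_monomial, h.ne', if_false, eval_mul,
        eval_C, eval_pow, eval_X, eval_zero, mul_zero, map_zero, zero_add]
      linear_combination conj a * conj z ^ (k + 1) * hz1 z hz n

/-- If some nonconstant coefficient of the antiholomorphic part of an approximation of `f`
exceeds the error, then `z * Q(z, f z)` has positive real part for some polynomial `Q`. -/
lemma exists_re_mul_eval_pos {f : ℂ → ℂ} {p q : ℂ[X]} {n : ℕ} {ε : ℝ}
    (h : ∀ z ∈ sphere (0 : ℂ) 1, ‖f z - (p.eval z + conj (q.eval z))‖ < ε)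
    (hq : ε ≤ ‖q.coeff (n + 1)‖) :
    ∃ Q : MvPolynomial (Fin 2) ℂ,
      ∀ z ∈ sphere (0 : ℂ) 1, 0 < (z * MvPolynomial.eval ![z, f z] Q).re := by
  obtain ⟨A, B, hAB⟩ := exists_pow_mul_conj_eval_eq q (n + 1)
  obtain ⟨b, hb, hbq⟩ : ∃ b : ℂ, ‖b‖ = 1 ∧ b * conj (q.coeff (n + 1)) = ‖q.coeff (n + 1)‖ := by
    obtain ⟨b, hb, hbq⟩ := RCLike.exists_norm_eq_mul_self (conj (q.coeff (n + 1)))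
    exact ⟨b, hb, by rw [← hbq]; simp⟩
  let L : ℂ[X] → MvPolynomial (Fin 2) ℂ := Polynomial.aeval (MvPolynomial.X 0)
  refine ⟨MvPolynomial.C b * MvPolynomial.X 0 ^ n * MvPolynomial.X 1 -
    L (C b * X ^ n * p + C b * A + C (conj b) * B), fun z hz => ?_⟩
  have hz' : ‖z‖ = 1 := by simpa using hz
  have hE : z * MvPolynomial.eval ![z, f z] (MvPolynomial.C b * MvPolynomial.X 0 ^ n *
      MvPolynomial.X 1 - L (C b * X ^ n * p + C b * A + C (conj b) * B)) =
      b * z ^ (n + 1) * (f z - (p.eval z + conj (q.eval z))) + ‖q.coeff (n + 1)‖ +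
        (conj (conj b * (z * B.eval z)) - conj b * (z * B.eval z)) := by
    rw [map_sub, eval_aeval_X_zero, ← hbq]
    simp only [map_mul, map_pow, MvPolynomial.eval_C, MvPolynomial.eval_X, eval_add, eval_mul,
      eval_C, eval_pow, eval_X, Complex.conj_conj, Matrix.cons_val_zero, Matrix.cons_val_one]
    have := hAB z hz'
    rw [map_mul] at this
    linear_combination b * this
  have hlt : ‖b * z ^ (n + 1) * (f z - (p.eval z + conj (q.eval z)))‖ < ε := by
    simpa [hb, hz'] using h z hz
  have hre := (abs_lt.1 ((Complex.abs_re_le_norm _).trans_lt hlt)).1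
  rw [hE, Complex.add_re, Complex.add_re, Complex.sub_re, Complex.conj_re, Complex.ofReal_re]
  linarith

/-- The maximum principle for the harmonic function `p + conj q`. -/
lemma norm_eval_add_conj_eval_le (p q : ℂ[X]) {M : ℝ}
    (h : ∀ z ∈ sphere (0 : ℂ) 1, ‖p.eval z + conj (q.eval z)‖ ≤ M) {w : ℂ}
    (hw : w ∈ closedBall (0 : ℂ) 1) : ‖p.eval w + conj (q.eval w)‖ ≤ M := by
  obtain ⟨b, hb, hbw⟩ := RCLike.exists_norm_eq_mul_self (p.eval w + conj (q.eval w))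
  have hre (z : ℂ) : (b * p.eval z + conj b * q.eval z).re =
      (b * (p.eval z + conj (q.eval z))).re := by
    simp [Complex.mul_re]; ring
  have hd : Differentiable ℂ fun z => Complex.exp (b * p.eval z + conj b * q.eval z) := by
    fun_prop
  have hmax := Complex.norm_le_of_forall_mem_frontier_norm_le (U := ball (0 : ℂ) 1)
    (C := Real.exp M) isBounded_ball hd.diffContOnCl (fun z hz => by
      rw [frontier_ball _ one_ne_zero] at hz
      rw [Complex.norm_exp, hre, Real.exp_le_exp]
      refine (Complex.re_le_norm _).trans ?_
      rw [norm_mul, hb, one_mul]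
      exact h z hz) (by rwa [closure_ball _ one_ne_zero])
  rw [Complex.norm_exp, hre, Real.exp_le_exp, ← hbw] at hmax
  simpa using hmax

lemma norm_eval_le_div_one_sub {q : ℂ[X]} {ε : ℝ} (hq : ∀ n, ‖q.coeff n‖ ≤ ε) {w : ℂ}
    (hw : ‖w‖ < 1) : ‖q.eval w‖ ≤ ε / (1 - ‖w‖) := by
  have hε : 0 ≤ ε := (norm_nonneg _).trans (hq 0)
  rw [eval_eq_sum_range, div_eq_mul_inv]
  calc _ ≤ ∑ i ∈ Finset.range (q.natDegree + 1), ε * ‖w‖ ^ i :=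
        norm_sum_le_of_le _ fun i _ => by
          rw [norm_mul, norm_pow]
          exact mul_le_mul_of_nonneg_right (hq i) (by positivity)
    _ ≤ ε * (1 - ‖w‖)⁻¹ := by
        rw [← Finset.mul_sum, ← tsum_geometric_of_lt_one (norm_nonneg w) hw]
        exact mul_le_mul_of_nonneg_left ((summable_geometric_of_lt_one (norm_nonneg w) hw).sum_le_tsum
          _ fun i _ => by positivity) hε

/-- A function on the circle extends holomorphically if it can be approximated by functions
`p + conj q` with arbitrarily small coefficients of `q`. -/
lemma extendsHolo_of_approx {f : ℂ → ℂ}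
    (h : ∀ ε > 0, ∃ p q : ℂ[X], (∀ n, ‖q.coeff n‖ ≤ ε) ∧
      ∀ z ∈ sphere (0 : ℂ) 1, ‖f z - (p.eval z + conj (q.eval z))‖ < ε) :
    ExtendsHolo f := by
  have hpos (j : ℕ) : (0 : ℝ) < 1 / (j + 1) := Nat.one_div_pos_of_nat
  choose p q hq hpq using fun j : ℕ => h (1 / (j + 1)) (hpos j)
  let H (j : ℕ) (z : ℂ) : ℂ := (p j).eval z + conj ((q j).eval z)
  have hlim := tendsto_one_div_add_atTop_nhds_zero_nat (𝕜 := ℝ)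
  have hHdist (i j : ℕ) {z : ℂ} (hz : z ∈ closedBall (0 : ℂ) 1) :
      dist (H i z) (H j z) ≤ 1 / (i + 1) + 1 / (j + 1) := by
    have := norm_eval_add_conj_eval_le (p i - p j) (q i - q j)
      (M := 1 / (i + 1) + 1 / (j + 1)) (fun z hz => ?_) hz
    · have he : H i z - H j z = (p i - p j).eval z + conj ((q i - q j).eval z) := by
        simp only [H, eval_sub, map_sub]
        ring
      rwa [dist_eq_norm, he]
    · have hi := hpq i z hz
      have hj := hpq j z hz
      rw [norm_sub_rev] at hi
      have he : (p i - p j).eval z + conj ((q i - q j).eval z) =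
          ((p i).eval z + conj ((q i).eval z) - f z) +
            (f z - ((p j).eval z + conj ((q j).eval z))) := by
        simp only [eval_sub, map_sub]
        ring
      rw [he]
      exact (norm_add_le _ _).trans (add_le_add hi.le hj.le)
  have hcauchy : UniformCauchySeqOn H Filter.atTop (closedBall (0 : ℂ) 1) := by
    rw [Metric.uniformCauchySeqOn_iff]
    intro ε hε
    obtain ⟨N, hN⟩ := Filter.eventually_atTop.1 (hlim.eventually_lt_const (half_pos hε))
    refine ⟨N, fun m hm n hn z hz => (hHdist m n hz).trans_lt ?_⟩
    linarith [hN m hm, hN n hn]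
  choose! F hF using fun z (hz : z ∈ closedBall (0 : ℂ) 1) =>
    cauchySeq_tendsto_of_complete (hcauchy.cauchySeq hz)
  have hunif := hcauchy.tendstoUniformlyOn_of_tendsto hF
  refine ⟨F, hunif.continuousOn (Filter.Frequently.of_forall fun j => ?_), ?_, fun z hz => ?_⟩
  · simp only [H]
    fun_prop
  · have hloc : TendstoLocallyUniformlyOn (fun j z => (p j).eval z) F Filter.atTop
        (ball (0 : ℂ) 1) := by
      rw [Metric.tendstoLocallyUniformlyOn_iff]
      intro ε hε x hx
      obtain ⟨r, hxr, hr⟩ := exists_between (mem_ball_zero_iff.1 hx)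
      refine ⟨ball 0 r, mem_nhdsWithin_of_mem_nhds
        (isOpen_ball.mem_nhds (mem_ball_zero_iff.2 hxr)), ?_⟩
      have hlim' := (hlim.div_const (1 - r)).eventually_lt_const
        (show 0 / (1 - r) < ε / 2 by rw [zero_div]; exact half_pos hε)
      filter_upwards [Metric.tendstoUniformlyOn_iff.1 hunif (ε / 2) (half_pos hε), hlim']
        with j hj hj' z hz
      have hzr := mem_ball_zero_iff.1 hz
      have hqz : ‖(q j).eval z‖ < ε / 2 := by
        refine (norm_eval_le_div_one_sub (hq j) (hzr.trans hr)).trans_lt (lt_of_le_of_lt ?_ hj')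
        exact div_le_div_of_nonneg_left (hpos j).le (by linarith) (by linarith)
      calc dist (F z) ((p j).eval z) ≤ dist (F z) (H j z) + dist (H j z) ((p j).eval z) :=
            dist_triangle _ _ _
        _ < ε / 2 + ε / 2 := add_lt_add (hj z (mem_closedBall_zero_iff.2 (hzr.trans hr).le))
            (by simpa [H, dist_eq_norm] using hqz)
        _ = ε := add_halves ε
    exact hloc.differentiableOn (Filter.Eventually.of_forall fun j => by fun_prop) isOpen_ball
  · refine tendsto_nhds_unique (hF z (sphere_subset_closedBall hz)) ?_
    rw [tendsto_iff_norm_sub_tendsto_zero]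
    refine squeeze_zero (fun _ => norm_nonneg _) (fun j => ?_) hlim
    rw [norm_sub_rev]
    exact (hpq j z hz).le

theorem stmt16 (f : ℂ → ℂ) (hf : ContinuousOn f (sphere (0:ℂ) 1))
    (hne : ¬ ExtendsHolo f) :
    ∃ Q : MvPolynomial (Fin 2) ℂ,
      (∀ z ∈ sphere (0:ℂ) 1, MvPolynomial.eval ![z, f z] Q ≠ 0) ∧
      HasWindingNumber (fun z => MvPolynomial.eval ![z, f z] Q) (-1) := by
  have hpos : ∃ Q : MvPolynomial (Fin 2) ℂ,
      ∀ z ∈ sphere (0 : ℂ) 1, 0 < (z * MvPolynomial.eval ![z, f z] Q).re := by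
    contrapose! hne
    refine extendsHolo_of_approx fun ε hε => ?_
    obtain ⟨p, q, hq0, h⟩ := exists_polynomial_add_conj_approx hf hε
    refine ⟨p, q, fun n => ?_, h⟩
    rcases n with _ | n
    · simpa [hq0] using hε.le
    · by_contra! hn
      obtain ⟨Q, hQ⟩ := exists_re_mul_eval_pos h hn.le
      obtain ⟨z, hz, hz'⟩ := hne Q
      exact absurd (hQ z hz) hz'.not_gt
  obtain ⟨Q, hQ⟩ := hpos
  refine ⟨Q, fun z hz h0 => ?_, hasWindingNumber_neg_one_of_re_mul_pos ?_ hQ⟩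
  · simpa [h0] using hQ z hz
  · refine (MvPolynomial.continuous_eval Q).comp_continuousOn (continuousOn_pi.2 fun i => ?_)
    fin_cases i
    · exact continuousOn_id
    · exact hf
end
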